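/- (Existence of Nash equilibria.) Every finite game — a finite nonempty set N of players, finite nonempty action sets A_i, and payoff functions u_i : ∏_j A_j → ℝ — has at least one Nash equilibrium in mixed strategies: a profile s of mixed strategies such that for every player i and every mixed strategy t_i of player i, Σ_a u_i(a)·s(a) ≥ Σ_a u_i(a)·(t_i, s_{-i})(a). -/

import Mathlib

open Finset

/-- `σ` is a mixed strategy over the finite action set `A`:
nonnegative and summing to `1`. -/
def IsMixed {A : Type*} [Fintype A] (σ : A → ℝ) : Prop :=
  (∀ a, 0 ≤ σ a) ∧ ∑ a, σ a = 1

/-- The probability that the mixed strategy profile `s` assigns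
to the action profile `a`, namely `∏ i, s i (a i)`. -/
def profProb {ι : Type*} [Fintype ι] {A : ι → Type*}
    (s : ∀ i, A i → ℝ) (a : ∀ i, A i) : ℝ :=
  ∏ i, s i (a i)

/-- Expected value of the payoff function `u` under the mixed strategy profile `s`. -/
def expPay {ι : Type*} [Fintype ι] [DecidableEq ι] {A : ι → Type*} [∀ i, Fintype (A i)]
    (u : (∀ i, A i) → ℝ) (s : ∀ i, A i → ℝ) : ℝ :=
  ∑ a : ∀ i, A i, u a * profProb s a

/-- `t` is a best response of player `i` to the opponents' strategies in `s`,
with respect to the payoff function `u`: `t` is a mixed strategy maximizing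
the expected payoff over all mixed strategies of player `i`. -/
def IsBestResponse {ι : Type*} [Fintype ι] [DecidableEq ι] {A : ι → Type*}
    [∀ i, Fintype (A i)] (u : (∀ j, A j) → ℝ) (s : ∀ j, A j → ℝ) (i : ι)
    (t : A i → ℝ) : Prop :=
  IsMixed t ∧ ∀ t' : A i → ℝ, IsMixed t' →
    expPay u (Function.update s i t') ≤ expPay u (Function.update s i t)

/-- `s` is a Nash equilibrium of the standard game with utilities `u`. -/
def IsNashEq {ι : Type*} [Fintype ι] [DecidableEq ι] {A : ι → Type*}
    [∀ i, Fintype (A i)] (u : ι → (∀ j, A j) → ℝ) (s : ∀ i, A i → ℝ) : Prop :=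
  (∀ i, IsMixed (s i)) ∧ ∀ i, IsBestResponse (u i) s i (s i)

/-- `s` is a growth equilibrium of the capital game with capital payoffs `x`,
endowments `w`, capital dynamics `f`, and linearizations `v` (unit durations):
every player's strategy maximizes the time-average growth rate
`∑ a, v i (f i (x i a) (w i)) * s(a)` of their capital, given the others. -/
def IsGrowthEq {ι : Type*} [Fintype ι] [DecidableEq ι] {A : ι → Type*}
    [∀ i, Fintype (A i)] (x : ι → (∀ j, A j) → ℝ) (w : ι → ℝ)
    (f : ι → ℝ → ℝ → ℝ) (v : ι → ℝ → ℝ) (s : ∀ i, A i → ℝ) : Prop :=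
  IsNashEq (fun i a => v i (f i (x i a) (w i))) s

/-! Nash's map raises the weight of each pure action that improves on the current payoff; since a
player's expected gains from pure deviations average to zero under the current strategy, a fixed
point admits no profitable pure deviation. Fixed points come from Brouwer's theorem, for which we
follow Milnor and Rogers. Suppose a `C¹` map `r` sends a ball into its boundary sphere and fixes
that sphere. For small `t` the map `id + t • (r - id)` permutes the ball, so the integral of its
Jacobian is the volume of the ball. This integral is polynomial in `t`, hence equals that volume at
`t = 1` too; but there the Jacobian is that of `r`, which vanishes. -/

section Determinant

open Polynomial

lemma exists_polynomial_eval_eq_det_add_smul {R M : Type*} [CommRing R] [Nontrivial R]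
    [AddCommGroup M] [Module R M] [Module.Free R M] [Module.Finite R M] (f g : M →ₗ[R] M) :
    ∃ p : R[X], p.natDegree ≤ Module.finrank R M ∧ ∀ t, p.eval t = LinearMap.det (f + t • g) := by
  let b := Module.finBasis R M
  let F := LinearMap.toMatrix b b f
  let G := LinearMap.toMatrix b b g
  refine ⟨((X : R[X]) • G.map C + F.map C).det, ?_, fun t => ?_⟩
  · simpa using natDegree_det_X_add_C_le G F
  · rw [← LinearMap.det_toMatrix b, ← coe_evalRingHom, RingHom.map_det]
    congr 1
    ext i j
    simpa [F, G, mul_comm t] using add_comm _ _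

lemma det_one_add_pos {E : Type*} [NormedAddCommGroup E] [NormedSpace ℝ E]
    [FiniteDimensional ℝ E] {T : E →L[ℝ] E} (hT : ‖T‖ < 1) : 0 < (1 + T).det := by
  by_contra! hle
  have hcont : ContinuousOn (fun s : ℝ => (1 + s • T).det) (Set.Icc 0 1) :=
    (ContinuousLinearMap.continuous_det.comp
      (g := ContinuousLinearMap.det) (f := fun s : ℝ => 1 + s • T) (by fun_prop)).continuousOn
  have hdet_one : (1 : E →L[ℝ] E).det = 1 := LinearMap.det_id
  obtain ⟨s, ⟨hs₀, hs₁⟩, hs⟩ : (0 : ℝ) ∈ (fun s : ℝ => (1 + s • T).det) '' Set.Icc 0 1 :=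
    intermediate_value_Icc' zero_le_one hcont (by simpa [hdet_one] using hle)
  have hsT : ‖-(s • T)‖ < 1 := by
    rw [norm_neg, norm_smul, Real.norm_of_nonneg hs₀]
    exact (mul_le_of_le_one_left (norm_nonneg T) hs₁).trans_lt hT
  have hunit : IsUnit (1 + s • T) := by simpa using isUnit_one_sub_of_norm_lt_one hsT
  exact ((hunit.map ContinuousLinearMap.toLinearMapRingHom).map LinearMap.det).ne_zero hs

open MeasureTheory in
lemma integral_eval_eq_of_infinite {α : Type*} [MeasurableSpace α] {μ : Measure α}
    {p : α → ℝ[X]} {d : ℕ} (hdeg : ∀ x, (p x).natDegree ≤ d) {s : Set ℝ} (hs : s.Infinite)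
    {c : ℝ} (hint : ∀ t ∈ s, Integrable (fun x => (p x).eval t) μ)
    (hc : ∀ t ∈ s, ∫ x, (p x).eval t ∂μ = c) (t : ℝ) : ∫ x, (p x).eval t ∂μ = c := by
  obtain ⟨nodes, hnodes, hcard⟩ := hs.exists_subset_card_eq (d + 1)
  have hinj : Set.InjOn id (nodes : Set ℝ) := Set.injOn_id _
  have hne : nodes.Nonempty := by rw [← card_pos]; lia
  let w (a : ℝ) : ℝ := (Lagrange.basis nodes id a).eval t
  have hw : ∑ a ∈ nodes, w a = 1 := by
    rw [← eval_finsetSum, Lagrange.sum_basis hinj hne, eval_one]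
  have hinterp (x : α) : (p x).eval t = ∑ a ∈ nodes, (p x).eval a * w a := by
    have hlt : (p x).degree < #nodes :=
      hcard ▸ degree_le_natDegree.trans_lt (by exact_mod_cast Nat.lt_succ_of_le (hdeg x))
    conv_lhs => rw [Lagrange.eq_interpolate hinj hlt]
    simp [Lagrange.interpolate_apply, eval_finsetSum, w]
  calc ∫ x, (p x).eval t ∂μ = ∑ a ∈ nodes, (∫ x, (p x).eval a ∂μ) * w a := by
        simp_rw [hinterp]
        rw [integral_finsetSum _ fun a ha => (hint a (hnodes ha)).mul_const _]
        simp_rw [integral_mul_const]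
    _ = c := by
        rw [sum_congr rfl fun a ha => by rw [hc a (hnodes ha)], ← mul_sum, hw, mul_one]

end Determinant

section Volume

open Function MeasureTheory

lemma bijective_id_add_of_lipschitzWith {E : Type*} [NormedAddCommGroup E] [CompleteSpace E]
    {h : E → E} {K : NNReal} (hh : LipschitzWith K h) (hK : K < 1) :
    Bijective fun x => x + h x := by
  refine (bijective_iff_existsUnique _).2 fun y => ?_
  have hcontr : ContractingWith K fun x => y - h x :=
    ⟨hK, by simpa using (LipschitzWith.const y).sub hh⟩
  have hiff (x : E) : x + h x = y ↔ IsFixedPt (fun x => y - h x) x := by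
    rw [IsFixedPt, sub_eq_iff_eq_add, eq_comm]
  simp_rw [hiff]
  exact ⟨_, hcontr.fixedPoint_isFixedPt, fun _ hx => hcontr.fixedPoint_unique hx⟩

lemma image_eq_of_bijective_of_eqOn_compl {α : Type*} {φ : α → α} {s : Set α} (hφ : Bijective φ)
    (hs : Set.EqOn φ id sᶜ) : φ '' s = s := by
  rw [← compl_inj_iff, ← Set.image_compl_eq hφ, hs.image_eq, Set.image_id]

variable {E : Type*} [NormedAddCommGroup E] [NormedSpace ℝ E] [FiniteDimensional ℝ E]
  [MeasurableSpace E] [BorelSpace E] {h : E → E} {L : NNReal} {s : Set E}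

lemma integral_det_one_add_fderiv (μ : Measure E) [μ.IsAddHaarMeasure] (hL : LipschitzWith L h)
    (hL_lt : L < 1) (hs : MeasurableSet s) (hdiff : ∀ x ∈ s, DifferentiableAt ℝ h x)
    (hzero : ∀ x ∉ s, h x = 0) (hμs : μ s ≠ ⊤) :
    IntegrableOn (fun x => (1 + fderiv ℝ h x).det) s μ ∧
      ∫ x in s, (1 + fderiv ℝ h x).det ∂μ = μ.real s := by
  have hbij : Bijective fun x => x + h x := bijective_id_add_of_lipschitzWith hL hL_lt
  have himage : (fun x => x + h x) '' s = s :=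
    image_eq_of_bijective_of_eqOn_compl hbij fun x hx => by simp [hzero x hx]
  have hderiv (x : E) (hx : x ∈ s) :
      HasFDerivWithinAt (fun x => x + h x) (1 + fderiv ℝ h x) s x :=
    ((hasFDerivAt_id x).add (hdiff x hx).hasFDerivAt).hasFDerivWithinAt
  have hdet (x : E) : |(1 + fderiv ℝ h x).det| • (1 : ℝ) = (1 + fderiv ℝ h x).det := by
    rw [smul_eq_mul, mul_one, abs_of_pos]
    exact det_one_add_pos ((norm_fderiv_le_of_lipschitz ℝ hL).trans_lt (by exact_mod_cast hL_lt))
  constructor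
  · have hint := integrableOn_image_iff_integrableOn_abs_det_fderiv_smul μ hs hderiv
      hbij.injective.injOn fun _ => (1 : ℝ)
    simp_rw [hdet, himage] at hint
    exact hint.1 (integrableOn_const hμs)
  · have hint := integral_image_eq_integral_abs_det_fderiv_smul μ hs hderiv
      hbij.injective.injOn fun _ => (1 : ℝ)
    simp_rw [hdet, himage] at hint
    simpa using hint.symm

lemma integral_det_one_add_fderiv_of_lipschitzWith (μ : Measure E) [μ.IsAddHaarMeasure]
    (hL : LipschitzWith L h) (hs : MeasurableSet s) (hdiff : ∀ x ∈ s, DifferentiableAt ℝ h x)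
    (hzero : ∀ x ∉ s, h x = 0) (hμs : μ s ≠ ⊤) :
    ∫ x in s, (1 + fderiv ℝ h x).det ∂μ = μ.real s := by
  choose p hdeg hp using fun x =>
    exists_polynomial_eval_eq_det_add_smul (1 : E →ₗ[ℝ] E) (fderiv ℝ h x : E →ₗ[ℝ] E)
  have hp_det (t : ℝ) (x : E) (hx : x ∈ s) :
      (p x).eval t = (1 + fderiv ℝ (fun y => t • h y) x).det := by
    rw [hp, fderiv_fun_const_smul (hdiff x hx)]
    rfl
  have hsmall (t : ℝ) (ht : t ∈ Set.Ioo 0 (L + 1 : ℝ)⁻¹) :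
      IntegrableOn (fun x => (p x).eval t) s μ ∧ ∫ x in s, (p x).eval t ∂μ = μ.real s := by
    have hlt : ‖t‖₊ * L < 1 := by
      rw [← NNReal.coe_lt_coe]
      push_cast
      rw [Real.norm_of_nonneg ht.1.le]
      calc t * L ≤ t * (L + 1) := by gcongr <;> [exact ht.1.le; linarith]
        _ < 1 := by rw [← lt_inv_mul_iff₀' (by positivity), mul_one]; exact ht.2
    have htL : LipschitzWith (‖t‖₊ * L) fun x => t • h x := (lipschitzWith_smul t).comp hL
    rw [integrableOn_congr_fun (hp_det t) hs, setIntegral_congr_fun hs (hp_det t)]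
    exact integral_det_one_add_fderiv μ htL hlt hs (fun x hx => (hdiff x hx).const_smul t)
      (fun x hx => by simp [hzero x hx]) hμs
  rw [← integral_eval_eq_of_infinite hdeg (Set.Ioo_infinite (by positivity))
    (fun t ht => (hsmall t ht).1) (fun t ht => (hsmall t ht).2) 1]
  exact setIntegral_congr_fun hs fun x hx => by simp [hp_det 1 x hx]

end Volume

lemma exists_lipschitzWith_retraction_of_convex {F : Type*} [NormedAddCommGroup F]
    [InnerProductSpace ℝ F] {K : Set F} (hne : K.Nonempty) (hcomplete : IsComplete K)
    (hconv : Convex ℝ K) :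
    ∃ P : F → F, LipschitzWith 1 P ∧ (∀ x, P x ∈ K) ∧ (∀ x ∈ K, P x = x) ∧
      ∀ x, P x ∈ interior K → P x = x := by
  choose P hPK hPmin using exists_norm_eq_iInf_of_complete_convex hne hcomplete hconv
  have hobtuse (x y : F) (hy : y ∈ K) : inner ℝ (x - P x) (y - P x) ≤ 0 :=
    (norm_eq_iInf_iff_real_inner_le_zero hconv (hPK x)).1 (hPmin x) y hy
  refine ⟨P, LipschitzWith.of_dist_le_mul fun x y => ?_, hPK, fun x hx => ?_, fun x hx => ?_⟩
  · have hinner : ‖P x - P y‖ * ‖P x - P y‖ ≤ ‖x - y‖ * ‖P x - P y‖ := by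
      calc ‖P x - P y‖ * ‖P x - P y‖
          = inner ℝ (x - y) (P x - P y) + inner ℝ (x - P x) (P y - P x)
            + inner ℝ (y - P y) (P x - P y) := by
            rw [← real_inner_self_eq_norm_mul_norm]
            simp only [inner_sub_left, inner_sub_right]
            ring
        _ ≤ inner ℝ (x - y) (P x - P y) := by
            linarith [hobtuse x (P y) (hPK y), hobtuse y (P x) (hPK x)]
        _ ≤ ‖x - y‖ * ‖P x - P y‖ := real_inner_le_norm _ _
    rw [NNReal.coe_one, one_mul, dist_eq_norm, dist_eq_norm]
    rcases (norm_nonneg (P x - P y)).eq_or_lt with hzero | hpos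
    · rw [← hzero]; positivity
    · exact le_of_mul_le_mul_right hinner hpos
  · exact (sub_eq_zero.1 (real_inner_self_nonpos.1 (hobtuse x x hx))).symm
  · have hseg : ∀ᶠ t : ℝ in nhds 0, P x + t • (x - P x) ∈ K :=
      ContinuousAt.eventually_mem (by fun_prop)
        (by simpa using! mem_interior_iff_mem_nhds.1 hx)
    obtain ⟨t, htK, ht⟩ := ((hseg.filter_mono nhdsWithin_le_nhds).and
      (self_mem_nhdsWithin : Set.Ioi (0 : ℝ) ∈ nhdsWithin 0 (Set.Ioi 0))).exists
    have hle : t * inner ℝ (x - P x) (x - P x) ≤ 0 := by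
      simpa [inner_smul_right] using hobtuse x _ htK
    exact (sub_eq_zero.1 (real_inner_self_nonpos.1 (nonpos_of_mul_nonpos_right hle ht))).symm

section Brouwer

open Function MeasureTheory Metric

variable {E : Type*} [NormedAddCommGroup E] [InnerProductSpace ℝ E] [FiniteDimensional ℝ E]

lemma det_fderiv_eq_zero_of_norm_eq {r : E → E} {x : E} {R : ℝ} (hR : R ≠ 0)
    (hr : DifferentiableAt ℝ r x) (hnorm : ∀ᶠ y in nhds x, ‖r y‖ = R) :
    (fderiv ℝ r x).det = 0 := by
  have horth (v : E) : inner ℝ (r x) (fderiv ℝ r x v) = 0 := by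
    have hconst : (fun y => ‖r y‖ ^ 2) =ᶠ[nhds x] fun _ => R ^ 2 := by
      filter_upwards [hnorm] with y hy
      rw [hy]
    have hderiv := hr.hasFDerivAt.norm_sq.fderiv.symm.trans hconst.fderiv_eq
    simpa using DFunLike.congr_fun hderiv v
  by_contra hdet
  have hunit : IsUnit (fderiv ℝ r x : E →ₗ[ℝ] E) :=
    (LinearMap.isUnit_iff_isUnit_det _).2 (isUnit_iff_ne_zero.2 hdet)
  obtain ⟨v, hv⟩ := ((Module.End.isUnit_iff _).1 hunit).surjective (r x)
  have hself : inner ℝ (r x) (r x) = 0 := by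
    simpa [← hv] using horth v
  rw [real_inner_self_eq_norm_mul_norm, hnorm.self_of_nhds] at hself
  simp [hR] at hself

lemma no_contDiff_retraction_sphere {r : E → E} {R : ℝ} (hR : 0 < R) (hr : ContDiff ℝ 1 r)
    (hnorm : ∀ x ∈ ball 0 R, ‖r x‖ = R) : ¬ ∀ x ∈ sphere 0 R, r x = x := by
  intro hfix
  borelize E
  obtain ⟨P, hP, hPmem, hPfix, hPint⟩ := exists_lipschitzWith_retraction_of_convex
    (nonempty_closedBall.2 hR.le) isClosed_closedBall.isComplete (convex_closedBall (0 : E) R)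
  obtain ⟨L, hL⟩ := (hr.sub contDiff_id).contDiffOn.exists_lipschitzOnWith one_ne_zero
    (convex_closedBall (0 : E) R) (isCompact_closedBall 0 R)
  -- Precomposing with the projection extends `r - id` by zero while keeping it Lipschitz on `E`.
  let h (x : E) : E := r (P x) - P x
  have hlip : LipschitzWith (L * 1) h := by
    rw [← lipschitzOnWith_univ]
    exact hL.comp hP.lipschitzOnWith fun x _ => hPmem x
  have heq : Set.EqOn h (fun x => r x - x) (ball 0 R) := fun x hx => by
    simp only [h, hPfix x (ball_subset_closedBall hx)]
  have hzero (x : E) (hx : x ∉ ball 0 R) : h x = 0 := by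
    refine sub_eq_zero.2 (hfix _ ?_)
    rw [← closedBall_sdiff_ball]
    refine ⟨hPmem x, fun hPx => hx ?_⟩
    rwa [← hPint x (by rwa [interior_closedBall _ hR.ne'])]
  have hderiv (x : E) (hx : x ∈ ball 0 R) : HasFDerivAt h (fderiv ℝ r x - 1) x :=
    ((hr.differentiable one_ne_zero x).hasFDerivAt.sub (hasFDerivAt_id x)).congr_of_eventuallyEq
      (heq.eventuallyEq_of_mem (isOpen_ball.mem_nhds hx))
  have hdet (x : E) (hx : x ∈ ball 0 R) : (1 + fderiv ℝ h x).det = 0 := by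
    rw [(hderiv x hx).fderiv, add_sub_cancel]
    exact det_fderiv_eq_zero_of_norm_eq hR.ne' (hr.differentiable one_ne_zero x)
      (Filter.eventually_of_mem (isOpen_ball.mem_nhds hx) hnorm)
  have hvolume := integral_det_one_add_fderiv_of_lipschitzWith Measure.addHaar hlip
    measurableSet_ball (fun x hx => (hderiv x hx).differentiableAt) hzero measure_ball_lt_top.ne
  rw [setIntegral_congr_fun measurableSet_ball hdet, integral_zero] at hvolume
  exact (ENNReal.toReal_pos (measure_ball_pos _ 0 hR).ne' measure_ball_lt_top.ne).ne hvolume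

lemma exists_isFixedPt_of_contDiff_of_hasCompactSupport {g : E → E} (hg : ContDiff ℝ 1 g)
    (hsupp : HasCompactSupport g) : ∃ x, IsFixedPt g x := by
  by_contra! hfix
  have hne (x : E) : x - g x ≠ 0 := fun hx => hfix x (sub_eq_zero.1 hx).symm
  obtain ⟨R, hR, hsub⟩ := hsupp.isBounded.subset_ball_lt 0 0
  have hu : ContDiff ℝ 1 fun x => x - g x := contDiff_id.sub hg
  refine no_contDiff_retraction_sphere (r := fun x => (R / ‖x - g x‖) • (x - g x)) hR
    ((contDiff_const.div (hu.norm ℝ hne) fun x => norm_ne_zero_iff.2 (hne x)).smul hu)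
    (fun x _ => ?_) fun x hx => ?_
  · rw [norm_smul, norm_div, norm_norm, Real.norm_of_nonneg hR.le,
      div_mul_cancel₀ _ (norm_ne_zero_iff.2 (hne x))]
  · have hgx : g x = 0 := image_eq_zero_of_notMem_tsupport fun hmem =>
      sphere_disjoint_ball.le_bot ⟨hx, hsub hmem⟩
    simp [hgx, mem_sphere_zero_iff_norm.1 hx, hR.ne']

lemma exists_isFixedPt_of_continuous_of_hasCompactSupport {f : E → E} (hf : Continuous f)
    (hsupp : HasCompactSupport f) : ∃ x, IsFixedPt f x := by
  by_contra! hfix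
  obtain ⟨g, hg, hdist, hsub⟩ := hf.exists_contDiff_approx 1 (hf.dist continuous_id)
    fun x => dist_pos.2 (hfix x)
  obtain ⟨x, hx⟩ := exists_isFixedPt_of_contDiff_of_hasCompactSupport hg (hsupp.mono hsub)
  have hlt := hdist x
  rw [hx.eq, dist_comm] at hlt
  exact hlt.false

lemma exists_isFixedPt_of_isCompact_of_convex_of_innerProductSpace {K : Set E} {f : E → E}
    (hne : K.Nonempty) (hcompact : IsCompact K) (hconv : Convex ℝ K) (hf : ContinuousOn f K)
    (hmaps : Set.MapsTo f K K) : ∃ x ∈ K, IsFixedPt f x := by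
  obtain ⟨P, hP, hPmem, hPfix, -⟩ :=
    exists_lipschitzWith_retraction_of_convex hne hcompact.isComplete hconv
  obtain ⟨R, hR⟩ := hcompact.isBounded.subset_closedBall 0
  obtain ⟨χ, hone, -, hsupp, hχ⟩ := exists_continuous_one_zero_of_isCompact
    (isCompact_closedBall (0 : E) R) isClosed_empty (Set.disjoint_empty _)
  obtain ⟨x, hx⟩ := exists_isFixedPt_of_continuous_of_hasCompactSupport
    (χ.continuous.smul (hf.comp_continuous hP.continuous hPmem)) hsupp.smul_right
  have hxR : x ∈ closedBall 0 R := by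
    rw [mem_closedBall_zero_iff, ← hx.eq]
    calc ‖χ x • f (P x)‖ = χ x * ‖f (P x)‖ := by rw [norm_smul, Real.norm_of_nonneg (hχ x).1]
      _ ≤ ‖f (P x)‖ := mul_le_of_le_one_left (norm_nonneg _) (hχ x).2
      _ ≤ R := mem_closedBall_zero_iff.1 (hR (hmaps (hPmem x)))
  have hfP : f (P x) = x := by simpa [hone hxR] using hx.eq
  have hxK : x ∈ K := hfP ▸ hmaps (hPmem x)
  exact ⟨x, hxK, by rwa [hPfix x hxK] at hfP⟩

end Brouwer

theorem exists_isFixedPt_of_isCompact_of_convex {E : Type*} [AddCommGroup E] [Module ℝ E]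
    [TopologicalSpace E] [IsTopologicalAddGroup E] [ContinuousSMul ℝ E] [T2Space E]
    [FiniteDimensional ℝ E] {K : Set E} {f : E → E} (hne : K.Nonempty) (hcompact : IsCompact K)
    (hconv : Convex ℝ K) (hf : ContinuousOn f K) (hmaps : Set.MapsTo f K K) :
    ∃ x ∈ K, Function.IsFixedPt f x := by
  let e := toEuclidean (E := E)
  have hsymm : Set.MapsTo e.symm (e '' K) K := by
    rintro _ ⟨x, hx, rfl⟩
    rwa [e.symm_apply_apply]
  obtain ⟨_, ⟨x, hx, rfl⟩, hfix⟩ := exists_isFixedPt_of_isCompact_of_convex_of_innerProductSpace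
    (hne.image e) (hcompact.image e.continuous) (hconv.is_linear_image e.toLinearMap.isLinear)
    (e.continuous.comp_continuousOn (hf.comp e.symm.continuous.continuousOn hsymm))
    fun y hy => Set.mem_image_of_mem e (hmaps (hsymm hy))
  exact ⟨x, hx, by simpa [Function.IsFixedPt] using hfix⟩

lemma nonpos_of_posPart_eq_mul {α : Type*} [Fintype α] {d σ : α → ℝ} {c : ℝ}
    (hsum : ∑ a, σ a * d a = 0) (hd : ∀ a, (d a)⁺ = c * σ a) (a : α) : d a ≤ 0 := by
  have hsq (b : α) : (d b)⁺ * (d b)⁺ = c * (σ b * d b) := by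
    rw [← mul_assoc, ← hd]
    rcases le_total (d b) 0 with hb | hb
    · simp [posPart_eq_zero.2 hb]
    · rw [posPart_eq_self.2 hb]
  have hzero : ∑ b, (d b)⁺ * (d b)⁺ = 0 := by
    rw [sum_congr rfl fun b _ => hsq b, ← mul_sum, hsum, mul_zero]
  rw [sum_eq_zero_iff_of_nonneg fun b _ => mul_self_nonneg _] at hzero
  exact posPart_eq_zero.1 (mul_self_eq_zero.1 (hzero a (mem_univ a)))

section Game

open Function

variable {ι : Type*} [Fintype ι] [DecidableEq ι] {A : ι → Type*}

lemma profProb_update (s : ∀ i, A i → ℝ) (i : ι) (t : A i → ℝ) (a : ∀ i, A i) :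
    profProb (update s i t) a = t (a i) * ∏ j ∈ univ \ {i}, s j (a j) := by
  simp only [profProb, apply_update (fun j (σ : A j → ℝ) => σ (a j))]
  exact prod_update_of_mem (mem_univ i) _ _

variable [∀ i, Fintype (A i)]

lemma continuous_expPay (u : (∀ i, A i) → ℝ) : Continuous (expPay u) := by
  unfold expPay profProb
  fun_prop

variable [∀ i, DecidableEq (A i)]

lemma expPay_update_eq_sum (u : (∀ i, A i) → ℝ) (s : ∀ i, A i → ℝ) (i : ι) (t : A i → ℝ) :
    expPay u (update s i t) = ∑ b, t b * expPay u (update s i (Pi.single b 1)) := by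
  simp only [expPay, profProb_update, mul_sum]
  rw [sum_comm]
  refine sum_congr rfl fun a _ => ?_
  simp only [Pi.single_apply, ite_mul, one_mul, zero_mul, mul_ite, mul_zero, sum_ite_eq, mem_univ,
    if_true]
  ring

/-- The change in the expectation of `u` when player `i` abandons `s i` for the pure action `a`. -/
def deviationGain (u : (∀ i, A i) → ℝ) (s : ∀ i, A i → ℝ) (i : ι) (a : A i) : ℝ :=
  expPay u (update s i (Pi.single a 1)) - expPay u s

lemma sum_mul_deviationGain (u : (∀ i, A i) → ℝ) (s : ∀ i, A i → ℝ) (i : ι) {t : A i → ℝ}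
    (ht : ∑ a, t a = 1) :
    ∑ a, t a * deviationGain u s i a = expPay u (update s i t) - expPay u s := by
  simp only [deviationGain, mul_sub, sum_sub_distrib, ← sum_mul, ht, one_mul,
    ← expPay_update_eq_sum]

lemma continuous_deviationGain (u : (∀ i, A i) → ℝ) (i : ι) (a : A i) :
    Continuous fun s => deviationGain u s i a :=
  ((continuous_expPay u).comp (continuous_id.update i continuous_const)).sub (continuous_expPay u)

lemma isNashEq_of_deviationGain_nonpos {u : ι → (∀ j, A j) → ℝ} {s : ∀ i, A i → ℝ}
    (hs : ∀ i, IsMixed (s i)) (hgain : ∀ i a, deviationGain (u i) s i a ≤ 0) : IsNashEq u s := by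
  refine ⟨hs, fun i => ⟨hs i, fun t ht => ?_⟩⟩
  rw [update_eq_self, ← sub_nonpos, ← sum_mul_deviationGain (u i) s i ht.2]
  exact sum_nonpos fun a _ => mul_nonpos_of_nonneg_of_nonpos (ht.1 a) (hgain i a)

/-- Nash's self-map of the space of profiles: each player raises the weights of the pure actions
that would improve on the current payoff, and renormalizes. -/
noncomputable def nashMap (u : ι → (∀ j, A j) → ℝ) (s : ∀ i, A i → ℝ) (i : ι) (a : A i) : ℝ :=
  (s i a + (deviationGain (u i) s i a)⁺) / (1 + ∑ b, (deviationGain (u i) s i b)⁺)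

lemma one_add_sum_posPart_pos {α : Type*} [Fintype α] (d : α → ℝ) : 0 < 1 + ∑ a, (d a)⁺ :=
  add_pos_of_pos_of_nonneg one_pos (sum_nonneg fun _ _ => posPart_nonneg _)

lemma continuous_nashMap (u : ι → (∀ j, A j) → ℝ) : Continuous (nashMap u) := by
  have hgain (i : ι) (a : A i) : Continuous fun s => (deviationGain (u i) s i a)⁺ :=
    continuous_posPart.comp (continuous_deviationGain (u i) i a)
  refine continuous_pi fun i => continuous_pi fun a => ?_
  have hdenom : Continuous fun s => 1 + ∑ b, (deviationGain (u i) s i b)⁺ :=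
    continuous_const.add (continuous_finsetSum _ fun b _ => hgain i b)
  have hweight : Continuous fun s : ∀ i, A i → ℝ => s i a := by fun_prop
  exact (hweight.add (hgain i a)).div hdenom fun s => (one_add_sum_posPart_pos _).ne'

lemma isMixed_nashMap (u : ι → (∀ j, A j) → ℝ) {s : ∀ i, A i → ℝ} {i : ι} (hs : IsMixed (s i)) :
    IsMixed (nashMap u s i) := by
  constructor
  · exact fun a => div_nonneg (add_nonneg (hs.1 a) (posPart_nonneg _))
      (one_add_sum_posPart_pos _).le
  · simp only [nashMap]
    rw [← sum_div, sum_add_distrib, hs.2, div_self (one_add_sum_posPart_pos _).ne']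

lemma deviationGain_nonpos_of_isFixedPt {u : ι → (∀ j, A j) → ℝ} {s : ∀ i, A i → ℝ}
    (hfix : IsFixedPt (nashMap u) s) {i : ι} (hs : IsMixed (s i)) (a : A i) :
    deviationGain (u i) s i a ≤ 0 := by
  refine nonpos_of_posPart_eq_mul (c := ∑ b, (deviationGain (u i) s i b)⁺) (σ := s i) ?_
    (fun b => ?_) a
  · rw [sum_mul_deviationGain (u i) s i hs.2, update_eq_self, sub_self]
  · have hb : nashMap u s i b = s i b := congr_fun (congr_fun hfix.eq i) b
    rw [nashMap, div_eq_iff (one_add_sum_posPart_pos _).ne'] at hb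
    linarith

end Game

/-- **Existence of Nash equilibria.** Every finite game — a finite
nonempty set of players, finite nonempty action sets, and real payoff functions
— has at least one Nash equilibrium in mixed strategies. -/
theorem nashEq_exists
    {ι : Type*} [Fintype ι] [DecidableEq ι] [Nonempty ι] {A : ι → Type*}
    [∀ i, Fintype (A i)] [∀ i, Nonempty (A i)]
    (u : ι → (∀ j, A j) → ℝ) :
    ∃ s : ∀ i, A i → ℝ, IsNashEq u s := by
  classical
  let K : Set (∀ i, A i → ℝ) := Set.univ.pi fun i => stdSimplex ℝ (A i)
  have hne : K.Nonempty := Set.univ_pi_nonempty_iff.2 fun i =>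
    ⟨_, single_mem_stdSimplex ℝ (Classical.arbitrary (A i))⟩
  have hcompact : IsCompact K := isCompact_univ_pi fun i => isCompact_stdSimplex ℝ (A i)
  have hconv : Convex ℝ K := convex_pi fun i _ => convex_stdSimplex ℝ (A i)
  have hmaps : Set.MapsTo (nashMap u) K K := fun s hs i hi => isMixed_nashMap u (hs i hi)
  obtain ⟨s, hs, hfix⟩ := exists_isFixedPt_of_isCompact_of_convex hne hcompact hconv
    (continuous_nashMap u).continuousOn hmaps
  have hmixed (i : ι) : IsMixed (s i) := hs i (Set.mem_univ i)
  exact ⟨s, isNashEq_of_deviationGain_nonpos hmixed fun i =>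
    deviationGain_nonpos_of_isFixedPt hfix (hmixed i)⟩
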